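/- There is a constant c > 0 such that for any θ ∈ (0, 1/2) and any μ with 0 < μ ≤ c · min{θ n^{-1}, n^{-5/4}}, for every w ∈ ℝ^{n−1} with 1/(20√5) ≤ ‖w‖ ≤ √((4n−1)/(4n)), the Hessian in w of the expected objective satisfies wᵀ ∇²_w E[h_μ(q(w)ᵀ x)] w / ‖w‖² ≤ −θ/(2√(2π)), where x ∈ ℝ^n is a random vector with i.i.d. BG(θ) entries. -/

import Mathlib

open MeasureTheory ProbabilityTheory Real Matrix
open scoped RealInnerProductSpace ENNReal NNReal

noncomputable section

/-- The Bernoulli–Gaussian law `BG(θ)`: with probability `θ` a standard Gaussian,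
with probability `1-θ` a point mass at `0`. -/
def bg (θ : ℝ) : Measure ℝ :=
  θ.toNNReal • gaussianReal 0 1 + (1 - θ).toNNReal • Measure.dirac 0

instance bg.instIsFiniteMeasure (θ : ℝ) : IsFiniteMeasure (bg θ) := by
  unfold bg; infer_instance

/-- Law of an `n × p` matrix with i.i.d. `BG(θ)` entries. -/
def bgMatrix (θ : ℝ) (n p : ℕ) : Measure (Fin n → Fin p → ℝ) :=
  Measure.pi fun _ => Measure.pi fun _ => bg θ

/-- Law of a vector in `ℝ^n` with i.i.d. `BG(θ)` entries. -/
def bgVec (θ : ℝ) (n : ℕ) : Measure (Fin n → ℝ) :=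
  Measure.pi fun _ => bg θ

/-- The smooth sparsity surrogate `h_μ(z) = μ log cosh (z/μ)`. -/
def hmu (μ z : ℝ) : ℝ := μ * Real.log (Real.cosh (z / μ))

/-- Reparametrization `q(w) = (w, √(1-‖w‖²))` with `w` in the unit ball of `ℝ^{n-1}`. -/
def qmap (n : ℕ) (w : EuclideanSpace ℝ (Fin (n - 1))) : Fin n → ℝ :=
  fun i => if h : (i : ℕ) < n - 1 then w ⟨i, h⟩ else Real.sqrt (1 - ‖w‖ ^ 2)

/-- `f(q; Y) = (1/p) ∑ₖ h_μ(qᵀ yₖ)`. -/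
def ffun (n p : ℕ) (μ : ℝ) (Y : Matrix (Fin n) (Fin p) ℝ)
    (q : EuclideanSpace ℝ (Fin n)) : ℝ :=
  (p : ℝ)⁻¹ * ∑ k : Fin p, hmu μ (∑ i : Fin n, q i * Y i k)

/-- `g(w; Y) = f(q(w); Y)`. -/
def gfun (n p : ℕ) (μ : ℝ) (Y : Matrix (Fin n) (Fin p) ℝ)
    (w : EuclideanSpace ℝ (Fin (n - 1))) : ℝ :=
  (p : ℝ)⁻¹ * ∑ k : Fin p, hmu μ (∑ i : Fin n, qmap n w i * Y i k)

/-- Gradient `∇g(w; Y)` in `w`. -/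
def gradg (n p : ℕ) (μ : ℝ) (Y : Matrix (Fin n) (Fin p) ℝ)
    (w : EuclideanSpace ℝ (Fin (n - 1))) : EuclideanSpace ℝ (Fin (n - 1)) :=
  gradient (gfun n p μ Y) w

/-- Hessian `∇²g(w; Y)` in `w`, as a continuous linear map. -/
def hessg (n p : ℕ) (μ : ℝ) (Y : Matrix (Fin n) (Fin p) ℝ)
    (w : EuclideanSpace ℝ (Fin (n - 1))) :
    EuclideanSpace ℝ (Fin (n - 1)) →L[ℝ] EuclideanSpace ℝ (Fin (n - 1)) :=
  fderiv ℝ (gradg n p μ Y) w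

/-- The set `Γ = {w : ‖w‖ < √((4n-1)/(4n))}`. -/
def GammaSet (n : ℕ) : Set (EuclideanSpace ℝ (Fin (n - 1))) :=
  {w | ‖w‖ < Real.sqrt ((4 * (n : ℝ) - 1) / (4 * n))}

/-- Spectral (`ℓ²→ℓ²` operator) norm of а matrix. -/
def specNorm {m k : ℕ} (M : Matrix (Fin m) (Fin k) ℝ) : ℝ :=
  ‖LinearMap.toContinuousLinearMap (Matrix.toEuclideanLin M)‖

/-- Largest magnitude of an entry of a matrix. -/
def Minf {m k : ℕ} (M : Matrix (Fin m) (Fin k) ℝ) : ℝ := ⨆ i, ⨆ j, |M i j|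

/-- Condition number: ratio of largest to smallest singular value. -/
def kappa {n : ℕ} (s : Fin n → ℝ) : ℝ := (⨆ i, s i) / (⨅ i, s i)

/-- Signed standard basis vectors `{± e_i}` of `ℝ^n`. -/
def SignedBasis (n : ℕ) : Set (EuclideanSpace ℝ (Fin n)) :=
  {b | ∃ i : Fin n, b = EuclideanSpace.single i (1 : ℝ) ∨ b = -EuclideanSpace.single i (1 : ℝ)}

/-- Set of local minimizers of `f(·; Y)` over the unit sphere `S^{n-1}`. -/
def LocalMins (n p : ℕ) (μ : ℝ) (Y : Matrix (Fin n) (Fin p) ℝ) :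
    Set (EuclideanSpace ℝ (Fin n)) :=
  {q | q ∈ Metric.sphere (0 : EuclideanSpace ℝ (Fin n)) 1 ∧
       IsLocalMinOn (ffun n p μ Y) (Metric.sphere (0 : EuclideanSpace ℝ (Fin n)) 1) q}

/-- Expected objective `E_x[h_μ(q(w)ᵀ x)]` for `x` with i.i.d. `BG(θ)` entries. -/
def Gexp (n : ℕ) (θ μ : ℝ) (w : EuclideanSpace ℝ (Fin (n - 1))) : ℝ :=
  ∫ x, hmu μ (∑ i : Fin n, qmap n w i * x i) ∂(bgVec θ n)

theorem hasDerivAt_tanh (x : ℝ) : HasDerivAt Real.tanh (1 / Real.cosh x ^ 2) x := by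
  have h := (Real.hasDerivAt_sinh x).div (Real.hasDerivAt_cosh x) (Real.cosh_pos x).ne'
  have e : Real.tanh = Real.sinh / Real.cosh := by
    ext y; simp [Real.tanh_eq_sinh_div_cosh]
  rw [e]
  refine h.congr_deriv ?_
  congr 1
  linarith [Real.cosh_sq x]

/-- The first derivative of `hmu μ`. -/
def hmuDeriv (μ z : ℝ) : ℝ := Real.tanh (z / μ)

/-- The second derivative of `hmu μ`. -/
def hmuDeriv2 (μ z : ℝ) : ℝ := 1 / (μ * Real.cosh (z / μ) ^ 2)

theorem hasDerivAt_hmu {μ : ℝ} (hμ : 0 < μ) (z : ℝ) : HasDerivAt (hmu μ) (hmuDeriv μ z) z := by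
  have h := (((hasDerivAt_id z).div_const μ).cosh.log (Real.cosh_pos _).ne').const_mul μ
  refine h.congr_deriv ?_
  rw [hmuDeriv, Real.tanh_eq_sinh_div_cosh]
  field_simp
  simp [mul_comm]

theorem hasDerivAt_hmuDeriv {μ : ℝ} (z : ℝ) :
    HasDerivAt (hmuDeriv μ) (hmuDeriv2 μ z) z := by
  have h := (hasDerivAt_tanh (z / μ)).comp z ((hasDerivAt_id z).div_const μ)
  refine h.congr_deriv ?_
  rw [hmuDeriv2]
  simp only [one_div, mul_inv]
  ring

theorem continuous_hmuDeriv (μ : ℝ) : Continuous (hmuDeriv μ) :=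
  continuous_iff_continuousAt.2 fun z => (hasDerivAt_hmuDeriv z).continuousAt

theorem continuous_hmuDeriv2 {μ : ℝ} (hμ : 0 < μ) : Continuous (hmuDeriv2 μ) := by
  unfold hmuDeriv2
  refine continuous_const.div (by fun_prop) fun z => ?_
  have := Real.cosh_pos (z / μ)
  positivity

theorem abs_hmuDeriv_le (μ z : ℝ) : |hmuDeriv μ z| ≤ 1 := by
  rw [hmuDeriv, Real.tanh_eq_sinh_div_cosh, abs_div, abs_of_pos (Real.cosh_pos _),
    div_le_one (Real.cosh_pos _)]
  refine abs_le_of_sq_le_sq ?_ (Real.cosh_pos _).le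
  linarith [Real.cosh_sq (z / μ)]

theorem hmuDeriv2_nonneg {μ : ℝ} (hμ : 0 < μ) (z : ℝ) : 0 ≤ hmuDeriv2 μ z := by
  unfold hmuDeriv2; positivity

theorem abs_hmuDeriv2_le {μ : ℝ} (hμ : 0 < μ) (z : ℝ) : |hmuDeriv2 μ z| ≤ 1 / μ := by
  rw [abs_of_nonneg (hmuDeriv2_nonneg hμ z), hmuDeriv2]
  refine one_div_le_one_div_of_le hμ ?_
  have := Real.one_le_cosh (z / μ)
  nlinarith [one_le_pow₀ (n := 2) this]

theorem sq_le_cosh_sq (y : ℝ) : y ^ 2 ≤ Real.cosh y ^ 2 := by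
  rw [Real.cosh_sq y]
  have : |y| ≤ |Real.sinh y| := by
    rw [Real.abs_sinh]
    exact Real.self_le_sinh_iff.2 (abs_nonneg y)
  linarith [sq_le_sq.2 this]

/-- Second-order pointwise bound: `z² h_μ''(z) ≤ μ`. -/
theorem hmuDeriv2_mul_sq_le {μ : ℝ} (hμ : 0 < μ) (z : ℝ) : hmuDeriv2 μ z * z ^ 2 ≤ μ := by
  have h := sq_le_cosh_sq (z / μ)
  have hc := Real.cosh_pos (z / μ)
  rw [hmuDeriv2, one_div_mul_eq_div, div_le_iff₀ (by positivity)]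
  rw [div_pow, div_le_iff₀ (by positivity)] at h
  linarith

theorem mul_one_sub_tanh_le {y : ℝ} (hy : 0 ≤ y) : y * (1 - Real.tanh y) ≤ 1 := by
  have hc := Real.cosh_pos y
  have h1 : 1 - Real.tanh y = Real.exp (-y) / Real.cosh y := by
    rw [Real.tanh_eq_sinh_div_cosh, ← Real.cosh_sub_sinh]; field_simp
  have h2 : Real.exp (-y) ≤ 1 := Real.exp_le_one_iff.2 (by linarith)
  have h3 : y ≤ Real.cosh y := by
    exact (le_abs_self _).trans ((sq_le_sq.1 (sq_le_cosh_sq y)).trans (abs_of_pos hc).le)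
  rw [h1, ← mul_div_assoc, div_le_one hc]
  nlinarith [Real.exp_pos (-y)]

/-- First-order pointwise bound: `z h_μ'(z) ≥ |z| - μ`. -/
theorem abs_sub_le_mul_hmuDeriv {μ : ℝ} (hμ : 0 < μ) (z : ℝ) : |z| - μ ≤ z * hmuDeriv μ z := by
  have key : ∀ z, 0 ≤ z → z - μ ≤ z * hmuDeriv μ z := by
    intro z hz
    have h := mul_one_sub_tanh_le (div_nonneg hz hμ.le)
    rw [div_mul_eq_mul_div, div_le_one hμ] at h
    unfold hmuDeriv
    linarith
  rcases le_total 0 z with hz | hz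
  · rw [abs_of_nonneg hz]; exact key z hz
  · rw [abs_of_nonpos hz]
    have := key (-z) (by linarith)
    simpa [hmuDeriv, neg_div, Real.tanh_neg] using this

theorem hmu_zero (μ : ℝ) : hmu μ 0 = 0 := by simp [hmu]

theorem hmuDeriv_zero (μ : ℝ) : hmuDeriv μ 0 = 0 := by simp [hmuDeriv]

theorem continuous_hmu {μ : ℝ} (hμ : 0 < μ) : Continuous (hmu μ) :=
  continuous_iff_continuousAt.2 fun z => (hasDerivAt_hmu hμ z).continuousAt

/-- A function with bounded derivative vanishing at the origin grows at most linearly. -/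
theorem abs_le_mul_abs_of_deriv_bound {k k' : ℝ → ℝ} {K : ℝ} (hk : ∀ z, HasDerivAt k (k' z) z)
    (hk0 : k 0 = 0) (hK : ∀ z, |k' z| ≤ K) (z : ℝ) : |k z| ≤ K * |z| := by
  have := Convex.norm_image_sub_le_of_norm_hasDerivWithin_le (s := Set.univ) (f := k) (f' := k')
    (C := K) (x := 0) (y := z) (fun z _ => (hk z).hasDerivWithinAt) (fun z _ => hK z)
    convex_univ trivial trivial
  simpa [hk0] using this

/-- Differentiation under the integral sign for `q ↦ ∫ k(ℓ x q) • c x`. -/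
theorem hasFDerivAt_integral_comp_smul {X E F : Type*} [MeasurableSpace X] {ν : Measure X}
    [NormedAddCommGroup E] [NormedSpace ℝ E] [NormedAddCommGroup F] [NormedSpace ℝ F]
    {k k' : ℝ → ℝ} {K : ℝ} (hk : ∀ z, HasDerivAt k (k' z) z) (hk0 : k 0 = 0)
    (hk' : Continuous k') (hK : ∀ z, |k' z| ≤ K)
    {ℓ : X → E →L[ℝ] ℝ} (hℓ : AEStronglyMeasurable ℓ ν) {c : X → F}
    (hc : AEStronglyMeasurable c ν) (hint : Integrable (fun x => ‖ℓ x‖ * ‖c x‖) ν) (q : E) :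
    HasFDerivAt (fun q => ∫ x, k (ℓ x q) • c x ∂ν)
      (∫ x, k' (ℓ x q) • (ℓ x).smulRight (c x) ∂ν) q := by
  have hkc : Continuous k := continuous_iff_continuousAt.2 fun z => (hk z).continuousAt
  have hK0 : 0 ≤ K := (abs_nonneg _).trans (hK 0)
  have hev : ∀ q : E, AEStronglyMeasurable (fun x => ℓ x q) ν := fun q =>
    (ContinuousLinearMap.apply ℝ ℝ q).continuous.comp_aestronglyMeasurable hℓ
  have hmeas : ∀ q : E, AEStronglyMeasurable (fun x => k (ℓ x q) • c x) ν := fun q =>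
    (hkc.comp_aestronglyMeasurable (hev q)).smul hc
  refine hasFDerivAt_integral_of_dominated_of_fderiv_le (𝕜 := ℝ) (s := Set.univ) (x₀ := q)
    (F' := fun q x => k' (ℓ x q) • (ℓ x).smulRight (c x))
    (bound := fun x => K * (‖ℓ x‖ * ‖c x‖)) Filter.univ_mem
    (Filter.Eventually.of_forall hmeas) ?_ ?_ ?_ (hint.const_mul K) ?_
  · refine ((hint.const_mul K).mul_const ‖q‖).mono' (hmeas q) (Filter.Eventually.of_forall ?_)
    intro x
    rw [norm_smul, Real.norm_eq_abs]
    have h1 := abs_le_mul_abs_of_deriv_bound hk hk0 hK (ℓ x q)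
    have h2 := (ℓ x).le_opNorm q
    rw [Real.norm_eq_abs] at h2
    calc |k (ℓ x q)| * ‖c x‖ ≤ (K * (‖ℓ x‖ * ‖q‖)) * ‖c x‖ := by gcongr; exact h1.trans (by gcongr)
      _ = _ := by ring
  · refine (hk'.comp_aestronglyMeasurable (hev q)).smul ?_
    have : Continuous fun p : (E →L[ℝ] ℝ) × F => p.1.smulRight p.2 := by fun_prop
    exact this.comp_aestronglyMeasurable (hℓ.prodMk hc)
  · refine Filter.Eventually.of_forall fun x q _ => ?_
    rw [norm_smul, ContinuousLinearMap.norm_smulRight_apply]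
    exact mul_le_mul_of_nonneg_right (hK _) (by positivity)
  · refine Filter.Eventually.of_forall fun x q _ => ?_
    have h := ((hk (ℓ x q)).hasFDerivAt.comp q (ℓ x).hasFDerivAt).smul_const (c x)
    refine h.congr_fderiv ?_
    ext v
    simp [smul_smul, mul_comm]

/-- The smoothed absolute moment `E h_μ(s V)` for a standard Gaussian `V`. -/
def phi (μ s : ℝ) : ℝ := ∫ v, hmu μ (s * v) ∂gaussianReal 0 1

/-- The first derivative of `phi μ`. -/
def phiDeriv (μ s : ℝ) : ℝ := ∫ v, hmuDeriv μ (s * v) * v ∂gaussianReal 0 1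

/-- The second derivative of `phi μ`. -/
def phiDeriv2 (μ s : ℝ) : ℝ := ∫ v, hmuDeriv2 μ (s * v) * v ^ 2 ∂gaussianReal 0 1

theorem integrable_abs_gaussianReal : Integrable (fun v : ℝ => |v|) (gaussianReal 0 1) :=
  ((memLp_id_gaussianReal 1).integrable le_rfl).abs

theorem integrable_sq_gaussianReal : Integrable (fun v : ℝ => v ^ 2) (gaussianReal 0 1) :=
  (memLp_id_gaussianReal 2).integrable_sq

theorem hasDerivAt_integral_gaussianReal {k k' : ℝ → ℝ} {K : ℝ}
    (hk : ∀ z, HasDerivAt k (k' z) z) (hk0 : k 0 = 0)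
    (hk' : Continuous k') (hK : ∀ z, |k' z| ≤ K) {c : ℝ → ℝ} (hc : Continuous c)
    (hint : Integrable (fun v => |v| * |c v|) (gaussianReal 0 1)) (s : ℝ) :
    HasDerivAt (fun s => ∫ v, k (s * v) * c v ∂gaussianReal 0 1)
      (∫ v, k' (s * v) * (v * c v) ∂gaussianReal 0 1) s := by
  let ℓ : ℝ → ℝ →L[ℝ] ℝ := fun v => (ContinuousLinearMap.id ℝ ℝ).smulRight v
  have hℓc : Continuous ℓ := by fun_prop
  have hn : ∀ v, ‖ℓ v‖ = |v| := fun v => by simp [ℓ]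
  have h := (hasFDerivAt_integral_comp_smul (ν := gaussianReal 0 1) hk hk0 hk' hK
    hℓc.aestronglyMeasurable hc.aestronglyMeasurable
    (by simpa only [hn, Real.norm_eq_abs] using hint) s).hasDerivAt
  refine h.congr_deriv ?_
  rw [ContinuousLinearMap.integral_apply]
  · simp [ℓ]
  · have hm : Continuous fun v => k' (ℓ v s) • (ℓ v).smulRight (c v) := by fun_prop
    refine (hint.const_mul K).mono' hm.aestronglyMeasurable (Filter.Eventually.of_forall ?_)
    intro v
    rw [norm_smul, ContinuousLinearMap.norm_smulRight_apply, hn, Real.norm_eq_abs,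
      Real.norm_eq_abs]
    exact mul_le_mul_of_nonneg_right (hK _) (by positivity)

theorem hasDerivAt_phi {μ : ℝ} (hμ : 0 < μ) (s : ℝ) : HasDerivAt (phi μ) (phiDeriv μ s) s := by
  have h := hasDerivAt_integral_gaussianReal (hasDerivAt_hmu hμ) (hmu_zero μ)
    (continuous_hmuDeriv μ) (abs_hmuDeriv_le μ) (c := fun _ => 1) continuous_const
    (by simpa using integrable_abs_gaussianReal) s
  simp only [mul_one] at h
  exact h

theorem hasDerivAt_phiDeriv {μ : ℝ} (hμ : 0 < μ) (s : ℝ) :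
    HasDerivAt (phiDeriv μ) (phiDeriv2 μ s) s := by
  have h := hasDerivAt_integral_gaussianReal (hasDerivAt_hmuDeriv (μ := μ)) (hmuDeriv_zero μ)
    (continuous_hmuDeriv2 hμ) (abs_hmuDeriv2_le hμ) (c := fun v => v) continuous_id
    (by simpa [← sq] using integrable_sq_gaussianReal) s
  simp only [← sq] at h
  exact h

theorem sq_mul_phiDeriv2_le {μ : ℝ} (hμ : 0 < μ) (s : ℝ) : s ^ 2 * phiDeriv2 μ s ≤ μ := by
  rw [phiDeriv2, ← integral_const_mul]
  have hle : ∀ v, s ^ 2 * (hmuDeriv2 μ (s * v) * v ^ 2) ≤ μ := fun v => by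
    have := hmuDeriv2_mul_sq_le hμ (s * v)
    linarith
  calc _ ≤ ∫ _, μ ∂gaussianReal 0 1 :=
        integral_mono_of_nonneg (Filter.Eventually.of_forall fun v =>
          mul_nonneg (sq_nonneg s) (mul_nonneg (hmuDeriv2_nonneg hμ _) (sq_nonneg v)))
          (integrable_const _) (Filter.Eventually.of_forall hle)
    _ = μ := by simp

theorem integral_abs_gaussianReal : ∫ v, |v| ∂gaussianReal 0 1 = √(2 / π) := by
  rw [integral_gaussianReal_eq_integral_smul one_ne_zero]
  have e : ∀ x : ℝ, gaussianPDFReal 0 1 x • |x|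
      = (√(2 * π))⁻¹ * (|x| * Real.exp (-(1 / 2) * |x| ^ 2)) := fun x => by
    simp [gaussianPDFReal]; ring_nf
  simp_rw [e]
  rw [integral_const_mul, integral_comp_abs (f := fun x => x * Real.exp (-(1 / 2) * x ^ 2))]
  have h := integral_rpow_mul_exp_neg_mul_rpow (p := 2) (q := 1) (b := 1 / 2) two_pos
    (by norm_num) (by norm_num)
  have h' : ∫ x in Set.Ioi (0 : ℝ), x * Real.exp (-(1 / 2) * x ^ 2) = 1 := by
    norm_num [Real.rpow_neg_one] at h ⊢
    exact h
  rw [h', Real.sqrt_mul zero_le_two, Real.sqrt_div zero_le_two]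
  have h2 : √2 * √2 = (2 : ℝ) := Real.mul_self_sqrt zero_le_two
  have : 0 < √π := Real.sqrt_pos.2 Real.pi_pos
  field_simp
  nlinarith

theorem le_mul_phiDeriv {μ s : ℝ} (hμ : 0 < μ) (hs : 0 < s) :
    s * √(2 / π) - μ ≤ s * phiDeriv μ s := by
  rw [phiDeriv, ← integral_abs_gaussianReal, ← integral_const_mul, ← integral_const_mul]
  have hi : Integrable (fun v => s * |v|) (gaussianReal 0 1) :=
    integrable_abs_gaussianReal.const_mul s
  have : ∫ v, s * |v| ∂gaussianReal 0 1 - μ = ∫ v, (s * |v| - μ) ∂gaussianReal 0 1 := by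
    rw [integral_sub hi (integrable_const _)]; simp
  rw [this]
  refine integral_mono (hi.sub (integrable_const _)) ?_ fun v => ?_
  · refine Integrable.const_mul ?_ s
    have hm : Continuous fun v => hmuDeriv μ (s * v) * v :=
      ((continuous_hmuDeriv μ).comp (by fun_prop)).mul continuous_id
    refine integrable_abs_gaussianReal.mono' hm.aestronglyMeasurable
      (Filter.Eventually.of_forall fun v => ?_)
    rw [Real.norm_eq_abs, abs_mul]
    exact mul_le_of_le_one_left (abs_nonneg _) (abs_hmuDeriv_le _ _)
  · have := abs_sub_le_mul_hmuDeriv hμ (s * v)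
    rw [abs_mul, abs_of_pos hs] at this
    simp only
    linarith

/-- The probability that a given set `J` is the support of an i.i.d. Bernoulli vector. -/
def supportWeight {ι : Type*} [Fintype ι] [DecidableEq ι] (θ : ℝ) (J : Finset ι) : ℝ :=
  (∏ _i ∈ J, θ) * ∏ _i ∈ Finset.univ \ J, (1 - θ)

theorem supportWeight_nonneg {ι : Type*} [Fintype ι] [DecidableEq ι] {θ : ℝ} (h0 : 0 ≤ θ)
    (h1 : θ ≤ 1) (J : Finset ι) : 0 ≤ supportWeight θ J :=
  mul_nonneg (Finset.prod_nonneg fun _ _ => h0) (Finset.prod_nonneg fun _ _ => sub_nonneg.2 h1)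

theorem isProbabilityMeasure_bg {θ : ℝ} (h0 : 0 ≤ θ) (h1 : θ ≤ 1) :
    IsProbabilityMeasure (bg θ) := by
  constructor
  have : θ.toNNReal + (1 - θ).toNNReal = 1 := by
    rw [← Real.toNNReal_add h0 (sub_nonneg.2 h1)]; simp
  simp only [bg, Measure.coe_add, Pi.add_apply, Measure.smul_apply, measure_univ]
  simp only [ENNReal.smul_def, smul_eq_mul, mul_one]
  exact_mod_cast this

theorem charFun_bg {θ : ℝ} (h0 : 0 ≤ θ) (h1 : θ ≤ 1) (t : ℝ) :
    charFun (bg θ) t = θ * Complex.exp (-(t ^ 2 / 2)) + (1 - θ) := by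
  have hi : ∀ ρ : Measure ℝ, IsFiniteMeasure ρ →
      Integrable (fun x : ℝ => Complex.exp (t * x * Complex.I)) ρ := fun ρ _ => by
    refine (integrable_const (1 : ℝ)).mono' (by fun_prop) (Filter.Eventually.of_forall fun x => ?_)
    rw [← Complex.ofReal_mul, Complex.norm_exp_ofReal_mul_I]
  have hg : ∫ x, Complex.exp (t * x * Complex.I) ∂gaussianReal 0 1
      = Complex.exp (-(t ^ 2 / 2)) := by
    rw [← charFun_apply_real, charFun_gaussianReal]; simp
  rw [charFun_apply_real, bg, integral_add_measure (hi _ inferInstance) (hi _ inferInstance),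
    integral_smul_nnreal_measure, integral_smul_nnreal_measure, hg, integral_dirac]
  simp [NNReal.smul_def, h0, sub_nonneg.2 h1]

/-- A linear form in a Bernoulli–Gaussian vector is a mixture of centred Gaussians,
indexed by the support of the vector. -/
theorem map_sum_bgVec {n : ℕ} {θ : ℝ} (h0 : 0 ≤ θ) (h1 : θ ≤ 1) (q : Fin n → ℝ) :
    (bgVec θ n).map (fun x => ∑ i, q i * x i) =
      ∑ J : Finset (Fin n), (supportWeight θ J).toNNReal •
        (gaussianReal 0 1).map (fun v => √(∑ i ∈ J, q i ^ 2) * v) := by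
  have : IsFiniteMeasure (bgVec θ n) := by unfold bgVec; infer_instance
  refine Measure.ext_of_charFun (funext fun t => ?_)
  have hR : charFun (∑ J : Finset (Fin n), (supportWeight θ J).toNNReal •
        (gaussianReal 0 1).map (fun v => √(∑ i ∈ J, q i ^ 2) * v)) t
      = ∑ J : Finset (Fin n), (supportWeight θ J : ℂ) *
        Complex.exp (-((∑ i ∈ J, q i ^ 2 : ℝ) * t ^ 2 / 2)) := by
    rw [charFun_apply, integral_finsetSum_measure]
    · refine Finset.sum_congr rfl fun J _ => ?_
      rw [integral_smul_nnreal_measure, ← charFun_apply, charFun_map_mul, charFun_gaussianReal,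
        NNReal.smul_def, Real.coe_toNNReal _ (supportWeight_nonneg h0 h1 J), Complex.real_smul]
      congr 2
      have hs : (√(∑ i ∈ J, q i ^ 2)) ^ 2 = ∑ i ∈ J, q i ^ 2 :=
        Real.sq_sqrt (Finset.sum_nonneg fun i _ => sq_nonneg _)
      have hs' : ((∑ i ∈ J, q i ^ 2 : ℝ) : ℂ) = ((√(∑ i ∈ J, q i ^ 2) : ℝ) : ℂ) ^ 2 := by
        exact_mod_cast hs.symm
      rw [hs']
      push_cast
      ring
    · intro J _
      refine (integrable_const (1 : ℝ)).mono' (by fun_prop)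
        (Filter.Eventually.of_forall fun x => ?_)
      rw [Complex.norm_exp_ofReal_mul_I]
  have hq : Measurable fun x : Fin n → ℝ => ∑ i, q i * x i := by fun_prop
  rw [hR, charFun_apply_real, integral_map hq.aemeasurable (by fun_prop)]
  have e : ∀ x : Fin n → ℝ, Complex.exp (t * ((∑ i, q i * x i : ℝ) : ℂ) * Complex.I)
      = ∏ i, Complex.exp (((t * q i : ℝ) : ℂ) * x i * Complex.I) := fun x => by
    rw [← Complex.exp_sum]
    congr 1
    push_cast
    rw [Finset.mul_sum, Finset.sum_mul]
    exact Finset.sum_congr rfl fun i _ => by ring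
  simp_rw [e]
  rw [bgVec, integral_fintype_prod_eq_prod
    (f := fun i (y : ℝ) => Complex.exp (((t * q i : ℝ) : ℂ) * y * Complex.I))]
  simp_rw [← charFun_apply_real, charFun_bg h0 h1]
  rw [Finset.prod_add, Finset.powerset_univ]
  refine Finset.sum_congr rfl fun J _ => ?_
  rw [Finset.prod_mul_distrib, ← Complex.exp_sum, supportWeight]
  push_cast
  rw [mul_right_comm]
  congr 2
  rw [Finset.sum_neg_distrib, Finset.sum_mul, Finset.sum_div]
  congr 1
  exact Finset.sum_congr rfl fun i _ => by ring

theorem integrable_hmu_mul_gaussianReal {μ : ℝ} (hμ : 0 < μ) (s : ℝ) :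
    Integrable (fun v => hmu μ (s * v)) (gaussianReal 0 1) := by
  refine (integrable_abs_gaussianReal.const_mul |s|).mono'
    ((continuous_hmu hμ).comp (by fun_prop)).aestronglyMeasurable
    (Filter.Eventually.of_forall fun v => ?_)
  have := abs_le_mul_abs_of_deriv_bound (hasDerivAt_hmu hμ) (hmu_zero μ) (abs_hmuDeriv_le μ)
    (s * v)
  rwa [one_mul, abs_mul] at this

theorem integral_hmu_bgVec {n : ℕ} {θ μ : ℝ} (h0 : 0 ≤ θ) (h1 : θ ≤ 1) (hμ : 0 < μ)
    (q : Fin n → ℝ) :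
    ∫ x, hmu μ (∑ i, q i * x i) ∂bgVec θ n =
      ∑ J : Finset (Fin n), supportWeight θ J * phi μ (√(∑ i ∈ J, q i ^ 2)) := by
  have hm := (continuous_hmu hμ).measurable
  have hq : Measurable fun x : Fin n → ℝ => ∑ i, q i * x i := by fun_prop
  rw [← integral_map hq.aemeasurable
    hm.aestronglyMeasurable, map_sum_bgVec h0 h1, integral_finsetSum_measure]
  · refine Finset.sum_congr rfl fun J _ => ?_
    rw [integral_smul_nnreal_measure, integral_map (by fun_prop) hm.aestronglyMeasurable,
      NNReal.smul_def, Real.coe_toNNReal _ (supportWeight_nonneg h0 h1 J), smul_eq_mul, phi]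
  · intro J _
    refine Integrable.smul_measure_nnreal ?_
    rw [integrable_map_measure hm.aestronglyMeasurable (by fun_prop)]
    exact integrable_hmu_mul_gaussianReal hμ _

theorem memLp_two_eval_bgVec {n : ℕ} {θ : ℝ} (h0 : 0 ≤ θ) (h1 : θ ≤ 1) (i : Fin n) :
    MemLp (fun x : Fin n → ℝ => x i) 2 (bgVec θ n) := by
  have := isProbabilityMeasure_bg h0 h1
  have h : MemLp id 2 (bg θ) := by
    refine (memLp_two_iff_integrable_sq (by fun_prop)).2 ?_
    refine (integrable_sq_gaussianReal.smul_measure_nnreal).add_measure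
      (Integrable.smul_measure_nnreal ?_)
    exact integrable_dirac (by simp)
  exact h.comp_measurePreserving (measurePreserving_eval (fun _ : Fin n => bg θ) i)

/-- The linear form `q ↦ ∑ i, q i * x i`. -/
def pairing {n : ℕ} (x : Fin n → ℝ) : (Fin n → ℝ) →L[ℝ] ℝ :=
  ∑ i, x i • ContinuousLinearMap.proj (R := ℝ) (φ := fun _ : Fin n => ℝ) i

theorem pairing_apply {n : ℕ} (x q : Fin n → ℝ) : pairing x q = ∑ i, q i * x i := by
  simp [pairing, mul_comm]

theorem memLp_pairing {n : ℕ} {θ : ℝ} (h0 : 0 ≤ θ) (h1 : θ ≤ 1) :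
    MemLp (pairing (n := n)) 2 (bgVec θ n) := by
  refine memLp_finsetSum Finset.univ (f := fun (i : Fin n) (x : Fin n → ℝ) =>
    x i • ContinuousLinearMap.proj (R := ℝ) (φ := fun _ : Fin n => ℝ) i) fun i _ => ?_
  have h := memLp_two_eval_bgVec h0 h1 i
  exact h.of_le_mul (h.aestronglyMeasurable.smul aestronglyMeasurable_const)
    (Filter.Eventually.of_forall fun x => (norm_smul _ _).trans_le (mul_comm _ _).le)

/-- The expected objective, as a function of the unconstrained direction, is twice
differentiable. -/
theorem exists_hasFDerivAt_integral_hmu {n : ℕ} {θ μ : ℝ} (h0 : 0 ≤ θ) (h1 : θ ≤ 1)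
    (hμ : 0 < μ) :
    ∃ D : (Fin n → ℝ) → (Fin n → ℝ) →L[ℝ] ℝ,
      (∀ q, HasFDerivAt (fun q => ∫ x, hmu μ (∑ i, q i * x i) ∂bgVec θ n) (D q) q) ∧
        Differentiable ℝ D := by
  have := isProbabilityMeasure_bg h0 h1
  have : IsProbabilityMeasure (bgVec θ n) := by unfold bgVec; infer_instance
  have hL := memLp_pairing (n := n) h0 h1
  have hm := hL.aestronglyMeasurable
  have hc : Continuous fun L : (Fin n → ℝ) →L[ℝ] ℝ => L.smulRight (1 : ℝ) := by fun_prop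
  refine ⟨fun q => ∫ x, hmuDeriv μ (pairing x q) • (pairing x).smulRight (1 : ℝ) ∂bgVec θ n,
    fun q => ?_, fun q => ?_⟩
  · have h := hasFDerivAt_integral_comp_smul (hasDerivAt_hmu hμ) (hmu_zero μ)
      (continuous_hmuDeriv μ) (abs_hmuDeriv_le μ) hm (c := fun _ => (1 : ℝ))
      aestronglyMeasurable_const (by simpa using (hL.integrable one_le_two).norm) q
    simpa only [smul_eq_mul, mul_one, pairing_apply] using h
  · refine (hasFDerivAt_integral_comp_smul (hasDerivAt_hmuDeriv (μ := μ)) (hmuDeriv_zero μ)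
      (continuous_hmuDeriv2 hμ) (abs_hmuDeriv2_le hμ) hm
      (hc.comp_aestronglyMeasurable hm) ?_ q).differentiableAt
    simpa [← sq] using hL.integrable_norm_pow two_ne_zero

theorem contDiffAt_qmap {n : ℕ} {w : EuclideanSpace ℝ (Fin (n - 1))} (hw : ‖w‖ < 1) :
    ContDiffAt ℝ 2 (qmap n) w := by
  refine contDiffAt_pi.2 fun i => ?_
  unfold qmap
  by_cases h : (i : ℕ) < n - 1
  · simp only [h, dif_pos]
    exact (EuclideanSpace.proj (𝕜 := ℝ) (⟨i, h⟩ : Fin (n - 1))).contDiff.contDiffAt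
  · simp only [h, dif_neg, not_false_eq_true]
    refine ContDiffAt.sqrt (contDiffAt_const.sub (contDiff_norm_sq ℝ).contDiffAt) ?_
    have := norm_nonneg w
    nlinarith

theorem differentiableAt_Gexp {n : ℕ} {θ μ : ℝ} (h0 : 0 ≤ θ) (h1 : θ ≤ 1) (hμ : 0 < μ)
    {w : EuclideanSpace ℝ (Fin (n - 1))} (hw : ‖w‖ < 1) :
    DifferentiableAt ℝ (Gexp n θ μ) w ∧ DifferentiableAt ℝ (fderiv ℝ (Gexp n θ μ)) w := by
  obtain ⟨D, hD, hD'⟩ := exists_hasFDerivAt_integral_hmu (n := n) h0 h1 hμ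
  have key : ∀ y : EuclideanSpace ℝ (Fin (n - 1)), ‖y‖ < 1 →
      HasFDerivAt (Gexp n θ μ) ((D (qmap n y)).comp (fderiv ℝ (qmap n) y)) y := fun y hy =>
    (hD (qmap n y)).comp y ((contDiffAt_qmap hy).differentiableAt two_ne_zero).hasFDerivAt
  refine ⟨(key w hw).differentiableAt, ?_⟩
  have hq := contDiffAt_qmap hw
  have hd : DifferentiableAt ℝ
      (fun y => (D (qmap n y)).comp (fderiv ℝ (qmap n) y)) w :=
    ((hD' _).comp w (hq.differentiableAt two_ne_zero)).clm_comp
      ((hq.fderiv_right (m := 1) (by norm_num)).differentiableAt one_ne_zero)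
  refine hd.congr_of_eventuallyEq ?_
  have : ∀ᶠ y in nhds w, ‖y‖ < 1 := continuous_norm.continuousAt.eventually_lt_const hw
  filter_upwards [this] with y hy using (key y hy).fderiv

/-- The Hessian quadratic form in the radial direction is the second derivative along the ray. -/
theorem inner_fderiv_gradient_eq {E : Type*} [NormedAddCommGroup E] [InnerProductSpace ℝ E]
    [CompleteSpace E] {G : E → ℝ} {w : E} (hG : ∀ᶠ y in nhds w, DifferentiableAt ℝ G y)
    (hG' : DifferentiableAt ℝ (fderiv ℝ G) w) {g₁ : ℝ → ℝ} {g₂ : ℝ}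
    (h₁ : ∀ᶠ t in nhds (1 : ℝ), HasDerivAt (fun t => G (t • w)) (g₁ t) t)
    (h₂ : HasDerivAt g₁ g₂ 1) :
    ⟪fderiv ℝ (gradient G) w w, w⟫ = g₂ := by
  have hgrad : gradient G = fun y => (InnerProductSpace.toDual ℝ E).symm (fderiv ℝ G y) := rfl
  have hray : ∀ t : ℝ, HasDerivAt (fun t : ℝ => t • w) w t := fun t => by
    simpa using (hasDerivAt_id t).smul_const w
  have hcont : Filter.Tendsto (fun t : ℝ => t • w) (nhds 1) (nhds w) := by
    simpa using (hray 1).continuousAt.tendsto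
  have hev : (fun t : ℝ => fderiv ℝ G (t • w) w) =ᶠ[nhds 1] g₁ := by
    filter_upwards [h₁, hcont.eventually hG] with t ht hGt
    exact (hGt.hasFDerivAt.comp_hasDerivAt t (hray t)).unique ht
  have hG1 : HasFDerivAt (fderiv ℝ G) (fderiv ℝ (fderiv ℝ G) w) ((1 : ℝ) • w) := by
    simpa using hG'.hasFDerivAt
  have h3 : HasDerivAt (fun t : ℝ => fderiv ℝ G (t • w) w) (fderiv ℝ (fderiv ℝ G) w w w) 1 :=
    ((ContinuousLinearMap.apply ℝ ℝ w).hasFDerivAt.comp_hasDerivAt (1 : ℝ)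
      (hG1.comp_hasDerivAt (1 : ℝ) (hray 1)))
  rw [← (h3.congr_of_eventuallyEq hev.symm).unique h₂, hgrad]
  let L : (E →L[ℝ] ℝ) →L[ℝ] E := LinearMap.mkContinuous
    { toFun := (InnerProductSpace.toDual ℝ E).symm
      map_add' := map_add _
      map_smul' := fun r f => by simp } 1 fun f => by simp
  have h4 : fderiv ℝ (fun y => (InnerProductSpace.toDual ℝ E).symm (fderiv ℝ G y)) w w
      = (InnerProductSpace.toDual ℝ E).symm (fderiv ℝ (fderiv ℝ G) w w) := by
    have := (L.hasFDerivAt.comp w hG'.hasFDerivAt).fderiv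
    exact congrArg (fun T => T w) this
  rw [h4, InnerProductSpace.toDual_symm_apply]

/-- `f` is twice differentiable at `1` with second derivative at most `B`. -/
def SecondDerivLE (f : ℝ → ℝ) (B : ℝ) : Prop :=
  ∃ (g₁ : ℝ → ℝ) (g₂ : ℝ), (∀ᶠ t in nhds (1 : ℝ), HasDerivAt f (g₁ t) t) ∧
    HasDerivAt g₁ g₂ 1 ∧ g₂ ≤ B

theorem SecondDerivLE.congr {f g : ℝ → ℝ} {B : ℝ} (h : SecondDerivLE f B)
    (hfg : g =ᶠ[nhds 1] f) : SecondDerivLE g B := by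
  obtain ⟨g₁, g₂, h₁, h₂, h₃⟩ := h
  refine ⟨g₁, g₂, ?_, h₂, h₃⟩
  filter_upwards [h₁, hfg.eventuallyEq_nhds] with t ht he using ht.congr_of_eventuallyEq he

theorem SecondDerivLE.sum {ι : Type*} {s : Finset ι} {f : ι → ℝ → ℝ} {p B : ι → ℝ}
    (hp : ∀ i ∈ s, 0 ≤ p i) (h : ∀ i ∈ s, SecondDerivLE (f i) (B i)) :
    SecondDerivLE (fun t => ∑ i ∈ s, p i * f i t) (∑ i ∈ s, p i * B i) := by
  choose! g₁ g₂ h₁ h₂ h₃ using h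
  refine ⟨fun t => ∑ i ∈ s, p i * g₁ i t, ∑ i ∈ s, p i * g₂ i, ?_, ?_,
    Finset.sum_le_sum fun i hi => mul_le_mul_of_nonneg_left (h₃ i hi) (hp i hi)⟩
  · filter_upwards [(Filter.eventually_all_finset s).2 h₁] with t ht
    exact HasDerivAt.fun_sum fun i hi => (ht i hi).const_mul (p i)
  · exact HasDerivAt.fun_sum fun i hi => (h₂ i hi).const_mul (p i)

theorem secondDerivLE_phi_linear {μ : ℝ} (hμ : 0 < μ) (σ : ℝ) :
    SecondDerivLE (fun t => phi μ (t * σ)) μ := by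
  have hl : ∀ t : ℝ, HasDerivAt (fun t => t * σ) σ t := fun t => by
    simpa using (hasDerivAt_id t).mul_const σ
  refine ⟨fun t => phiDeriv μ (t * σ) * σ, phiDeriv2 μ (1 * σ) * σ * σ,
    Filter.Eventually.of_forall fun t => (hasDerivAt_phi hμ _).comp t (hl t),
    ((hasDerivAt_phiDeriv hμ _).comp 1 (hl 1)).mul_const σ, ?_⟩
  have := sq_mul_phiDeriv2_le hμ σ
  rw [one_mul]
  linarith

theorem secondDerivLE_phi_sqrt {μ c α : ℝ} (hμ : 0 < μ) (hα : 0 ≤ α) (hα1 : α < 1)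
    (hμc : μ ≤ c * √(1 - α)) (hc : 2 * c ≤ √(2 / π)) :
    SecondDerivLE (fun t => phi μ (√(1 - α * t ^ 2))) (-(α * (√(2 / π) - 2 * c))) := by
  have hpos : ∀ᶠ t in nhds (1 : ℝ), 0 < 1 - α * t ^ 2 := by
    have : ContinuousAt (fun t : ℝ => 1 - α * t ^ 2) 1 := by fun_prop
    exact this.eventually_const_lt (by simpa using hα1)
  have hr : ∀ t : ℝ, 0 < 1 - α * t ^ 2 →
      HasDerivAt (fun t => √(1 - α * t ^ 2)) (-(α * t) / √(1 - α * t ^ 2)) t := fun t ht => by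
    have h := ((((hasDerivAt_id t).pow 2).const_mul α).const_sub 1).sqrt ht.ne'
    refine h.congr_deriv ?_
    have := Real.sqrt_pos.2 ht
    simp only [id, Nat.cast_ofNat, Pi.pow_apply, mul_one, Nat.add_one_sub_one, pow_one]
    field_simp
  set r := √(1 - α) with hrdef
  have hr0 : 0 < r := Real.sqrt_pos.2 (by linarith)
  have hr2 : r ^ 2 = 1 - α := Real.sq_sqrt (by linarith)
  have e1 : √(1 - α * (1 : ℝ) ^ 2) = r := by simp [hrdef]
  have hp1 : 0 < 1 - α * (1 : ℝ) ^ 2 := by simpa using hα1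
  have hr1 := hr 1 hp1
  have hnum : HasDerivAt (fun t : ℝ => -(α * t)) (-α) 1 := by
    simpa using ((hasDerivAt_id (1 : ℝ)).const_mul α).fun_neg
  have hquot := hnum.div hr1 (by rw [e1]; exact hr0.ne')
  refine ⟨fun t => phiDeriv μ (√(1 - α * t ^ 2)) * (-(α * t) / √(1 - α * t ^ 2)),
    phiDeriv2 μ r * (α / r) ^ 2 + phiDeriv μ r * (-(α / r ^ 3)), ?_, ?_, ?_⟩
  · filter_upwards [hpos] with t ht using (hasDerivAt_phi hμ _).comp t (hr t ht)
  · refine (((hasDerivAt_phiDeriv hμ _).comp 1 hr1).mul hquot).congr_deriv ?_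
    simp only [Function.comp, Pi.div_apply, e1]
    have : -α * r - -(α * 1) * (-(α * 1) / r) = -(α / r) := by
      field_simp
      linear_combination (-α) * hr2
    rw [this]
    field_simp
  · have h1 := sq_mul_phiDeriv2_le hμ r
    have h2 := le_mul_phiDeriv hμ hr0
    have hrle : r ≤ 1 := by nlinarith
    have e : phiDeriv2 μ r * (α / r) ^ 2 + phiDeriv μ r * (-(α / r ^ 3))
        = α * (α * (r ^ 2 * phiDeriv2 μ r) - r * phiDeriv μ r) / r ^ 4 := by
      field_simp
      ring
    have h3 : α * (r ^ 2 * phiDeriv2 μ r) - r * phiDeriv μ r ≤ -(r * (√(2 / π) - 2 * c)) := by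
      have : α * (r ^ 2 * phiDeriv2 μ r) ≤ μ :=
        (mul_le_mul_of_nonneg_left h1 hα).trans (mul_le_of_le_one_left hμ.le hα1.le)
      linarith
    have h4 : r ^ 4 ≤ r := pow_le_of_le_one hr0.le hrle (by norm_num)
    rw [e, div_le_iff₀ (by positivity)]
    have h5 : r ^ 4 * (√(2 / π) - 2 * c) ≤ r * (√(2 / π) - 2 * c) :=
      mul_le_mul_of_nonneg_right h4 (by linarith)
    calc _ ≤ α * (-(r * (√(2 / π) - 2 * c))) := mul_le_mul_of_nonneg_left h3 hα
      _ ≤ α * (-(r ^ 4 * (√(2 / π) - 2 * c))) :=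
          mul_le_mul_of_nonneg_left (by linarith) hα
      _ = _ := by ring

/-- The vector `w` padded by a zero last coordinate. -/
def padZero (n : ℕ) (w : EuclideanSpace ℝ (Fin (n - 1))) : Fin n → ℝ :=
  fun i => if h : (i : ℕ) < n - 1 then w ⟨i, h⟩ else 0

theorem sum_padZero_sq (m : ℕ) (w : EuclideanSpace ℝ (Fin (m + 1 - 1))) :
    ∑ i, padZero (m + 1) w i ^ 2 = ‖w‖ ^ 2 := by
  rw [EuclideanSpace.real_norm_sq_eq, Fin.sum_univ_castSucc]
  simp [padZero]

theorem qmap_smul_sq (m : ℕ) {w : EuclideanSpace ℝ (Fin (m + 1 - 1))} {t : ℝ}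
    (ht : ‖t • w‖ < 1) (i : Fin (m + 1)) :
    qmap (m + 1) (t • w) i ^ 2 = t ^ 2 * padZero (m + 1) w i ^ 2 +
      if i = Fin.last m then 1 - t ^ 2 * ‖w‖ ^ 2 else 0 := by
  have hsq : ‖t • w‖ ^ 2 = t ^ 2 * ‖w‖ ^ 2 := by rw [norm_smul, mul_pow]; simp
  have hle : 0 ≤ 1 - ‖t • w‖ ^ 2 := by nlinarith [norm_nonneg (t • w)]
  by_cases h : (i : ℕ) < m + 1 - 1
  · have hi : i ≠ Fin.last m := fun e => by simp [e] at h
    simp only [qmap, padZero, h, dif_pos, hi, if_false, PiLp.smul_apply, smul_eq_mul]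
    ring
  · have hi : i = Fin.last m := Fin.ext (by have := i.2; simp at h ⊢; omega)
    simp only [qmap, padZero, hi, if_true]
    rw [dif_neg (by simp), dif_neg (by simp), Real.sq_sqrt hle, hsq]
    ring

theorem sum_qmap_smul_sq (m : ℕ) {w : EuclideanSpace ℝ (Fin (m + 1 - 1))} {t : ℝ}
    (ht : ‖t • w‖ < 1) (J : Finset (Fin (m + 1))) :
    ∑ i ∈ J, qmap (m + 1) (t • w) i ^ 2 = if Fin.last m ∈ J then
      1 - (∑ i ∈ Finset.univ \ J, padZero (m + 1) w i ^ 2) * t ^ 2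
      else t ^ 2 * ∑ i ∈ J, padZero (m + 1) w i ^ 2 := by
  simp_rw [qmap_smul_sq m ht]
  rw [Finset.sum_add_distrib, Finset.sum_ite_eq', ← Finset.mul_sum]
  split_ifs
  · rw [← sum_padZero_sq, ← Finset.sum_sdiff (Finset.subset_univ J)]
    ring
  · ring

theorem sum_supportWeight {ι : Type*} [Fintype ι] [DecidableEq ι] (θ : ℝ) :
    ∑ J : Finset ι, supportWeight θ J = 1 := by
  have h := Finset.prod_add (fun _ : ι => θ) (fun _ => 1 - θ) Finset.univ
  rw [Finset.powerset_univ] at h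
  simpa [supportWeight] using h.symm

theorem sum_supportWeight_mem_notMem {ι : Type*} [Fintype ι] [DecidableEq ι] (θ : ℝ) {i l : ι}
    (hil : i ≠ l) :
    ∑ J : Finset ι, (if l ∈ J ∧ i ∉ J then supportWeight θ J else 0) = θ * (1 - θ) := by
  have h := Finset.prod_add (fun j : ι => if j = i then 0 else θ)
    (fun j => if j = l then 0 else 1 - θ) Finset.univ
  rw [Finset.powerset_univ] at h
  have hL : ∏ j : ι, ((if j = i then 0 else θ) + if j = l then 0 else 1 - θ)
      = θ * (1 - θ) := by
    have : ∀ j : ι, ((if j = i then 0 else θ) + if j = l then 0 else 1 - θ)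
        = (if j = l then θ else 1) * if j = i then 1 - θ else 1 := fun j => by
      by_cases h1 : j = i <;> by_cases h2 : j = l <;> simp_all
    simp_rw [this]
    rw [Finset.prod_mul_distrib, Finset.prod_ite_eq', Finset.prod_ite_eq']
    simp
  rw [← hL, h]
  refine Finset.sum_congr rfl fun J _ => ?_
  by_cases hi : i ∈ J
  · rw [if_neg (by tauto), Finset.prod_eq_zero hi (by simp), zero_mul]
  by_cases hl : l ∈ J
  · rw [if_pos ⟨hl, hi⟩, supportWeight]
    congr 1
    · exact Finset.prod_congr rfl fun j hj => by rw [if_neg (by rintro rfl; exact hi hj)]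
    · exact Finset.prod_congr rfl fun j hj => by
        rw [if_neg (by rintro rfl; exact (Finset.mem_sdiff.1 hj).2 hl)]
  · rw [if_neg (by tauto), Finset.prod_eq_zero (i := l) (s := Finset.univ \ J) (by simp [hl])
      (by simp), mul_zero]

theorem sum_supportWeight_mul_sum_sdiff (m : ℕ) (θ : ℝ)
    (w : EuclideanSpace ℝ (Fin (m + 1 - 1))) :
    ∑ J : Finset (Fin (m + 1)), (if Fin.last m ∈ J then
      supportWeight θ J * ∑ i ∈ Finset.univ \ J, padZero (m + 1) w i ^ 2 else 0)
      = θ * (1 - θ) * ‖w‖ ^ 2 := by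
  have e : ∀ J : Finset (Fin (m + 1)), (if Fin.last m ∈ J then
      supportWeight θ J * ∑ i ∈ Finset.univ \ J, padZero (m + 1) w i ^ 2 else 0)
      = ∑ i, (if Fin.last m ∈ J ∧ i ∉ J then supportWeight θ J else 0) *
          padZero (m + 1) w i ^ 2 := fun J => by
    by_cases h : Fin.last m ∈ J
    · simp only [h, if_true, true_and, ite_mul, zero_mul]
      rw [← Finset.sum_filter, Finset.mul_sum]
      refine Finset.sum_congr ?_ fun _ _ => rfl
      ext; simp
    · simp [h]
  simp_rw [e]
  rw [Finset.sum_comm, ← sum_padZero_sq, Finset.mul_sum]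
  refine Finset.sum_congr rfl fun i _ => ?_
  rw [← Finset.sum_mul]
  by_cases hi : i = Fin.last m
  · simp [hi, padZero]
  · rw [sum_supportWeight_mem_notMem θ hi]

/-- Along the ray through `w`, the expected objective has negative second derivative, up to
the smoothing error `μ`. -/
theorem secondDerivLE_Gexp_ray (m : ℕ) {θ μ c : ℝ} (h0 : 0 ≤ θ) (h1 : θ ≤ 1) (hμ : 0 < μ)
    {w : EuclideanSpace ℝ (Fin (m + 1 - 1))} (hw : ‖w‖ < 1) (hμc : μ ≤ c * √(1 - ‖w‖ ^ 2))
    (hc : 2 * c ≤ √(2 / π)) :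
    SecondDerivLE (fun t => Gexp (m + 1) θ μ (t • w))
      (μ - θ * (1 - θ) * (√(2 / π) - 2 * c) * ‖w‖ ^ 2) := by
  have hw2 : ‖w‖ ^ 2 < 1 := by nlinarith [norm_nonneg w]
  have hc0 : 0 ≤ c := by
    by_contra! hneg
    nlinarith [Real.sqrt_nonneg (1 - ‖w‖ ^ 2)]
  set α : Finset (Fin (m + 1)) → ℝ :=
    fun J => ∑ i ∈ Finset.univ \ J, padZero (m + 1) w i ^ 2 with hα
  have hα0 : ∀ J, 0 ≤ α J := fun J => Finset.sum_nonneg fun i _ => sq_nonneg _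
  have hαw : ∀ J, α J ≤ ‖w‖ ^ 2 := fun J => by
    rw [← sum_padZero_sq]
    exact Finset.sum_le_sum_of_subset_of_nonneg (Finset.subset_univ _) fun i _ _ => sq_nonneg _
  have hball : ∀ᶠ t in nhds (1 : ℝ), ‖t • w‖ < 1 := by
    have : ContinuousAt (fun t : ℝ => ‖t • w‖) 1 := by fun_prop
    exact this.eventually_lt_const (by simpa using hw)
  have hterm : ∀ J : Finset (Fin (m + 1)),
      SecondDerivLE (fun t => phi μ (√(∑ i ∈ J, qmap (m + 1) (t • w) i ^ 2)))
        (if Fin.last m ∈ J then -(α J * (√(2 / π) - 2 * c)) else μ) := fun J => by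
    by_cases hJ : Fin.last m ∈ J
    · simp only [hJ, if_true]
      refine (secondDerivLE_phi_sqrt hμ (hα0 J) ((hαw J).trans_lt hw2) ?_ hc).congr ?_
      · refine hμc.trans (mul_le_mul_of_nonneg_left (Real.sqrt_le_sqrt ?_) hc0)
        linarith [hαw J]
      · filter_upwards [hball] with t ht
        rw [sum_qmap_smul_sq m ht, if_pos hJ]
    · simp only [hJ, if_false]
      refine (secondDerivLE_phi_linear hμ (√(∑ i ∈ J, padZero (m + 1) w i ^ 2))).congr ?_
      filter_upwards [hball, lt_mem_nhds (zero_lt_one (α := ℝ))] with t ht ht0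
      rw [sum_qmap_smul_sq m ht, if_neg hJ, Real.sqrt_mul (sq_nonneg t), Real.sqrt_sq ht0.le]
  obtain ⟨g₁, g₂, d₁, d₂, d₃⟩ := SecondDerivLE.sum (s := Finset.univ)
    (p := fun J : Finset (Fin (m + 1)) => supportWeight θ J)
    (fun J _ => supportWeight_nonneg h0 h1 J) (fun J _ => hterm J)
  have hG : (fun t : ℝ => Gexp (m + 1) θ μ (t • w)) = fun t => ∑ J : Finset (Fin (m + 1)),
      supportWeight θ J * phi μ (√(∑ i ∈ J, qmap (m + 1) (t • w) i ^ 2)) :=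
    funext fun t => integral_hmu_bgVec h0 h1 hμ _
  rw [hG]
  refine ⟨g₁, g₂, d₁, d₂, d₃.trans ?_⟩
  calc ∑ J : Finset (Fin (m + 1)), supportWeight θ J *
        (if Fin.last m ∈ J then -(α J * (√(2 / π) - 2 * c)) else μ)
      ≤ ∑ J : Finset (Fin (m + 1)), (μ * supportWeight θ J - (√(2 / π) - 2 * c) *
        (if Fin.last m ∈ J then supportWeight θ J * α J else 0)) := by
        refine Finset.sum_le_sum fun J _ => ?_
        have hp := supportWeight_nonneg h0 h1 J
        split_ifs
        · nlinarith [mul_nonneg hμ.le hp]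
        · linarith
    _ = _ := by
        rw [Finset.sum_sub_distrib, ← Finset.mul_sum, ← Finset.mul_sum, sum_supportWeight,
          sum_supportWeight_mul_sum_sdiff]
        ring

/-- Proposition: negative curvature region of the expected objective. -/
theorem statement4 :
    ∃ c : ℝ, 0 < c ∧
      ∀ (n : ℕ) (θ μ : ℝ), θ ∈ Set.Ioo (0 : ℝ) (1 / 2) → 0 < μ →
        μ ≤ c * min (θ / n) ((n : ℝ) ^ (-(5 : ℝ) / 4)) →
        ∀ w : EuclideanSpace ℝ (Fin (n - 1)),
          1 / (20 * Real.sqrt 5) ≤ ‖w‖ →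
          ‖w‖ ≤ Real.sqrt ((4 * (n : ℝ) - 1) / (4 * n)) →
          ⟪fderiv ℝ (gradient (Gexp n θ μ)) w w, w⟫ / ‖w‖ ^ 2 ≤
            -(θ / (2 * Real.sqrt (2 * π))) := by
  have hK : (7 / 10 : ℝ) ≤ √(2 / π) := by
    refine Real.le_sqrt_of_sq_le ?_
    rw [le_div_iff₀ Real.pi_pos]
    linarith [Real.pi_lt_d2]
  refine ⟨1 / 20000, by norm_num, fun n θ μ hθ hμ hμc w hw1 hw2 => ?_⟩
  obtain ⟨hθ0, hθ1⟩ := hθ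
  have hw0 : 0 < ‖w‖ := lt_of_lt_of_le (by positivity) hw1
  obtain _ | m := n
  · have h := hμc.trans (mul_le_mul_of_nonneg_left (min_le_left _ _) (by norm_num))
    simp at h
    linarith
  have hn : (1 : ℝ) ≤ ((m + 1 : ℕ) : ℝ) := by exact_mod_cast Nat.succ_pos m
  set N : ℝ := ((m + 1 : ℕ) : ℝ) with hN
  have hμ1 : μ ≤ 1 / 20000 * (θ / N) :=
    hμc.trans (mul_le_mul_of_nonneg_left (min_le_left _ _) (by norm_num))
  have hθN : θ / N ≤ θ := div_le_self hθ0.le hn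
  have hwsq : ‖w‖ ^ 2 ≤ 1 - 1 / (4 * N) := by
    have h := pow_le_pow_left₀ hw0.le hw2 2
    rw [Real.sq_sqrt (div_nonneg (by linarith) (by linarith))] at h
    refine h.trans_eq ?_
    field_simp
  have hwlo : 1 / 2000 ≤ ‖w‖ ^ 2 := by
    have h := pow_le_pow_left₀ (by positivity) hw1 2
    rw [div_pow, mul_pow, Real.sq_sqrt (by norm_num)] at h
    linarith
  have hw : ‖w‖ < 1 := by
    have : 0 < 1 / (4 * N) := by positivity
    nlinarith
  have hbound := secondDerivLE_Gexp_ray m (c := 1 / 20000) hθ0.le (by linarith) hμ hw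
    (by
      have h1 : 1 / (2 * N) ≤ √(1 - ‖w‖ ^ 2) := by
        refine Real.le_sqrt_of_sq_le ?_
        have : (1 / (2 * N)) ^ 2 ≤ 1 / (4 * N) := by
          rw [div_pow, one_pow]
          refine one_div_le_one_div_of_le (by positivity) ?_
          nlinarith
        linarith
      have h2 : θ / N ≤ 1 / (2 * N) := by
        rw [div_le_div_iff₀ (by positivity) (by positivity)]
        nlinarith
      linarith) (by linarith)
  obtain ⟨g₁, g₂, h₁, h₂, h₃⟩ := hbound
  have hball : ∀ᶠ y in nhds w, ‖y‖ < 1 := continuous_norm.continuousAt.eventually_lt_const hw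
  rw [inner_fderiv_gradient_eq
    (hball.mono fun y hy => (differentiableAt_Gexp hθ0.le (by linarith) hμ hy).1)
    (differentiableAt_Gexp hθ0.le (by linarith) hμ hw).2 h₁ h₂, div_le_iff₀ (by positivity)]
  have hKeq : θ / (2 * √(2 * π)) = θ * √(2 / π) / 4 := by
    have hp : 0 < √π := Real.sqrt_pos.2 Real.pi_pos
    have h2 : √2 * √2 = (2 : ℝ) := Real.mul_self_sqrt zero_le_two
    rw [Real.sqrt_mul zero_le_two, Real.sqrt_div zero_le_two]
    field_simp
    linarith
  rw [hKeq]
  refine h₃.trans ?_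
  set K := √(2 / π)
  have hμw : μ ≤ θ / 10 * ‖w‖ ^ 2 := by nlinarith
  have h5 : θ * (1 / 2) * (K - 2 * (1 / 20000)) ≤ θ * (1 - θ) * (K - 2 * (1 / 20000)) :=
    mul_le_mul_of_nonneg_right (mul_le_mul_of_nonneg_left (by linarith) hθ0.le) (by linarith)
  have h6 : θ * (7 / 10) ≤ θ * K := mul_le_mul_of_nonneg_left hK hθ0.le
  have h7 : θ / 10 - θ * (1 - θ) * (K - 2 * (1 / 20000)) ≤ -(θ * K / 4) := by linarith
  have h8 := mul_le_mul_of_nonneg_right h7 (sq_nonneg ‖w‖)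
  linarith

end
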